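/- The infinite series identity 45π/4 = Σ_{k=0}^{∞} (4/27)^k · [(1)_k (1/2)_k (1/2)_k (1/2)_k] / [(7/6)_k (5/4)_k (7/4)_k (11/6)_k] · (184k³ + 338k² + 193k + 32) holds, where the sum is over natural numbers k and all quantities are real numbers. -/

import Mathlib

noncomputable def risingFactorial (a : ℝ) (k : ℕ) : ℝ := ∏ i ∈ Finset.range k, (a + i)

/-!
The proof accelerates the Leibniz series `π / 4 = ∑ (-1) ^ k / (2 * k + 1)` with a Wilf–Zeilberger
pair `F`, `G`, that is, `F (n + 1) k - F n k = G n (k + 1) - G n k`, whose row `F 0` is the Leibniz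
series. Since `G n k` tends to zero as `k → ∞`, the row sums `∑ₖ F n k` decrease by `G n 0` when `n`
increases by one. They start at `π / 4` and tend to zero, because
`|F (n + 1) k| ≤ 16 / 27 * |F n k|` and the row `F 1` converges absolutely. Hence
`∑ₙ G n 0 = π / 4`, and `45 * G n 0` is the summand of the theorem.
-/

open Filter Topology Finset

section RisingFactorial

lemma risingFactorial_zero (a : ℝ) : risingFactorial a 0 = 1 :=
  prod_range_zero _

lemma risingFactorial_succ (a : ℝ) (k : ℕ) :
    risingFactorial a (k + 1) = risingFactorial a k * (a + k) :=
  prod_range_succ _ k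

lemma risingFactorial_pos {a : ℝ} (ha : 0 < a) (k : ℕ) : 0 < risingFactorial a k :=
  prod_pos fun _ _ ↦ by positivity

end RisingFactorial

section WZPair

/-- The functions `F` and `G` form a *Wilf–Zeilberger pair*: the discrete 1-form
`F n k dk + G n k dn` is closed. -/
def IsWZPair {E : Type*} [AddCommGroup E] (F G : ℕ → ℕ → E) : Prop :=
  ∀ n k, F (n + 1) k - F n k = G n (k + 1) - G n k

lemma IsWZPair.sum_range_succ_left {E : Type*} [AddCommGroup E] {F G : ℕ → ℕ → E}
    (hFG : IsWZPair F G) (n K : ℕ) :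
    ∑ k ∈ range K, F (n + 1) k = ∑ k ∈ range K, F n k + (G n K - G n 0) := by
  rw [← sum_range_sub (G n) K, ← sum_add_distrib]
  exact sum_congr rfl fun k _ ↦ by rw [← hFG n k, add_sub_cancel]

lemma IsWZPair.tendsto_sum_row {E : Type*} [AddCommGroup E] [TopologicalSpace E]
    [IsTopologicalAddGroup E] {F G : ℕ → ℕ → E} (hFG : IsWZPair F G)
    (hG : ∀ n, Tendsto (G n) atTop (𝓝 0)) {s : E}
    (hF : Tendsto (fun K ↦ ∑ k ∈ range K, F 0 k) atTop (𝓝 s)) (N : ℕ) :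
    Tendsto (fun K ↦ ∑ k ∈ range K, F N k) atTop (𝓝 (s - ∑ n ∈ range N, G n 0)) := by
  induction N with
  | zero => simpa using hF
  | succ N ih =>
    simp only [hFG.sum_range_succ_left]
    convert ih.add ((hG N).sub_const (G N 0)) using 2
    rw [sum_range_succ]
    abel

theorem IsWZPair.tendsto_sum_column_zero {E : Type*} [NormedAddCommGroup E] [CompleteSpace E]
    {F G : ℕ → ℕ → E} (hFG : IsWZPair F G) (hG : ∀ n, Tendsto (G n) atTop (𝓝 0)) {s : E}
    (hF : Tendsto (fun K ↦ ∑ k ∈ range K, F 0 k) atTop (𝓝 s)) {f : ℕ → E} {bound : ℕ → ℝ}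
    (h_summable : Summable bound) (h_lim : ∀ k, Tendsto (F · k) atTop (𝓝 (f k)))
    (h_bound : ∀ᶠ n in atTop, ∀ k, ‖F n k‖ ≤ bound k) :
    Tendsto (fun N ↦ ∑ n ∈ range N, G n 0) atTop (𝓝 (s - ∑' k, f k)) := by
  have h_row : ∀ᶠ N in atTop, s - ∑' k, F N k = ∑ n ∈ range N, G n 0 := by
    filter_upwards [h_bound] with N hN
    have h_sum : HasSum (F N) (∑' k, F N k) := (h_summable.of_norm_bounded hN).hasSum
    rw [tendsto_nhds_unique h_sum.tendsto_sum_nat (hFG.tendsto_sum_row hG hF N), sub_sub_cancel]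
  exact ((tendsto_tsum_of_dominated_convergence h_summable h_lim h_bound).const_sub s).congr' h_row

end WZPair

section Leibniz

/-- A two-parameter family whose row `n = 0` is the Leibniz series for `π / 4`. It is the first
member of a Wilf–Zeilberger pair. As a function of `k` it is proportional to the
very-well-poised term
`(-1) ^ k * (a + 2 * k) * (b)ₖ (c)ₖ (d)ₖ / ((1 + a - b)ₖ (1 + a - c)ₖ (1 + a - d)ₖ)` with
`a = 3 * n + 1`, `b = 2 * n + 1`, `c = n + 1 / 2` and `d = 1 / 2`. -/
noncomputable def leibnizTerm (n k : ℕ) : ℝ :=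
  (-1) ^ k * (3 * n + 1 + 2 * k) *
    (risingFactorial 1 (2 * n + k) * risingFactorial (1 / 2) (n + k) * risingFactorial (1 / 2) k *
      risingFactorial (1 / 2) n * risingFactorial 1 (2 * n)) /
    (risingFactorial 1 (n + k) * risingFactorial (3 / 2) (2 * n + k) *
      risingFactorial (3 / 2) (3 * n + k))

/-- The ratio `leibnizTerm (n + 1) k / leibnizTerm n k`. -/
noncomputable def leibnizRatioLeft (n k : ℕ) : ℝ :=
  8 * (3 * n + 4 + 2 * k) * (2 * n + 1 + k) * (2 * n + 2 + k) * (2 * n + 1 + 2 * k) *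
      (2 * n + 1) ^ 2 * (2 * n + 2) /
    ((3 * n + 1 + 2 * k) * (n + 1 + k) * (4 * n + 3 + 2 * k) * (4 * n + 5 + 2 * k) *
      (6 * n + 3 + 2 * k) * (6 * n + 5 + 2 * k) * (6 * n + 7 + 2 * k))

/-- The ratio `leibnizTerm n (k + 1) / leibnizTerm n k`. -/
noncomputable def leibnizRatioRight (n k : ℕ) : ℝ :=
  -((3 * n + 3 + 2 * k) * (2 * n + 1 + k) * (2 * n + 1 + 2 * k) * (1 + 2 * k)) /
    ((3 * n + 1 + 2 * k) * (n + 1 + k) * (4 * n + 3 + 2 * k) * (6 * n + 3 + 2 * k))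

/-- The rational certificate of the Wilf–Zeilberger pair: the quotient of the second member
`leibnizMate` by the first member `leibnizTerm`. It is the output of Gosper's algorithm on
`leibnizTerm (n + 1) k - leibnizTerm n k`. -/
noncomputable def leibnizCert (n k : ℕ) : ℝ :=
  (8 * k ^ 4 + (88 * n + 52) * k ^ 3 + (360 * n ^ 2 + 428 * n + 122) * k ^ 2 +
      (616 * n ^ 3 + 1092 * n ^ 2 + 622 * n + 113) * k +
      (2 * n + 1) * (184 * n ^ 3 + 338 * n ^ 2 + 193 * n + 32)) /
    ((3 * n + 1 + 2 * k) * (4 * n + 3 + 2 * k) * (6 * n + 3 + 2 * k) * (6 * n + 5 + 2 * k))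

/-- The second member of the Wilf–Zeilberger pair of `leibnizTerm`. -/
noncomputable def leibnizMate (n k : ℕ) : ℝ :=
  leibnizTerm n k * leibnizCert n k

lemma leibnizTerm_succ_left (n k : ℕ) :
    leibnizTerm (n + 1) k = leibnizTerm n k * leibnizRatioLeft n k := by
  have h₁ := (risingFactorial_pos one_pos (n + k)).ne'
  have h₂ := (risingFactorial_pos (a := 3 / 2) (by norm_num) (2 * n + k)).ne'
  have h₃ := (risingFactorial_pos (a := 3 / 2) (by norm_num) (3 * n + k)).ne'
  unfold leibnizTerm leibnizRatioLeft
  rw [show 2 * (n + 1) + k = 2 * n + k + 1 + 1 by ring, show n + 1 + k = n + k + 1 by ring,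
    show 2 * (n + 1) = 2 * n + 1 + 1 by ring, show 3 * (n + 1) + k = 3 * n + k + 1 + 1 + 1 by ring]
  simp only [risingFactorial_succ]
  push_cast
  rw [div_mul_div_comm, div_eq_div_iff (by positivity) (by positivity)]
  ring

lemma leibnizTerm_succ_right (n k : ℕ) :
    leibnizTerm n (k + 1) = leibnizTerm n k * leibnizRatioRight n k := by
  have h₁ := (risingFactorial_pos one_pos (n + k)).ne'
  have h₂ := (risingFactorial_pos (a := 3 / 2) (by norm_num) (2 * n + k)).ne'
  have h₃ := (risingFactorial_pos (a := 3 / 2) (by norm_num) (3 * n + k)).ne'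
  unfold leibnizTerm leibnizRatioRight
  simp only [← add_assoc, risingFactorial_succ]
  push_cast
  rw [div_mul_div_comm, div_eq_div_iff (by positivity) (by positivity)]
  ring

lemma leibnizTerm_zero_left (k : ℕ) : leibnizTerm 0 k = (-1) ^ k / (2 * k + 1) := by
  induction k with
  | zero => simp [leibnizTerm, risingFactorial_zero]
  | succ k ih =>
    rw [leibnizTerm_succ_right, ih, leibnizRatioRight]
    push_cast
    rw [div_mul_div_comm, div_eq_div_iff (by positivity) (by positivity)]
    ring

lemma leibnizRatio_cert (n k : ℕ) :
    leibnizRatioLeft n k - 1 =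
      leibnizRatioRight n k * leibnizCert n (k + 1) - leibnizCert n k := by
  unfold leibnizRatioLeft leibnizRatioRight leibnizCert
  push_cast
  rw [show 3 * (n : ℝ) + 1 + 2 * (k + 1) = 3 * n + 3 + 2 * k by ring,
    show 4 * (n : ℝ) + 3 + 2 * (k + 1) = 4 * n + 5 + 2 * k by ring,
    show 6 * (n : ℝ) + 3 + 2 * (k + 1) = 6 * n + 5 + 2 * k by ring,
    show 6 * (n : ℝ) + 5 + 2 * (k + 1) = 6 * n + 7 + 2 * k by ring]
  field_simp
  ring

lemma isWZPair_leibniz : IsWZPair leibnizTerm leibnizMate := fun n k ↦ by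
  rw [leibnizMate, leibnizMate, leibnizTerm_succ_left, leibnizTerm_succ_right]
  linear_combination leibnizTerm n k * leibnizRatio_cert n k

lemma leibnizRatioLeft_nonneg (n k : ℕ) : 0 ≤ leibnizRatioLeft n k := by
  unfold leibnizRatioLeft
  positivity

lemma leibnizRatioLeft_le (n k : ℕ) :
    leibnizRatioLeft n k ≤ (3 * n + 4 + 2 * k) / (3 * n + 1 + 2 * k) *
      (4 * (2 * n + 1) ^ 2 * (2 * n + 2) /
        ((6 * n + 3 + 2 * k) * (6 * n + 5 + 2 * k) * (6 * n + 7 + 2 * k))) := by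
  have h_factor : leibnizRatioLeft n k =
      (4 * n + 2 + 2 * k) / (4 * n + 3 + 2 * k) * ((4 * n + 4 + 2 * k) / (4 * n + 5 + 2 * k)) *
      ((2 * n + 1 + 2 * k) / (2 * n + 2 + 2 * k)) * ((3 * n + 4 + 2 * k) / (3 * n + 1 + 2 * k) *
      (4 * (2 * n + 1) ^ 2 * (2 * n + 2) /
        ((6 * n + 3 + 2 * k) * (6 * n + 5 + 2 * k) * (6 * n + 7 + 2 * k)))) := by
    unfold leibnizRatioLeft
    field_simp
    ring
  have h₁ : (4 * n + 2 + 2 * k : ℝ) / (4 * n + 3 + 2 * k) ≤ 1 :=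
    div_le_one_of_le₀ (by linarith) (by positivity)
  have h₂ : (4 * n + 4 + 2 * k : ℝ) / (4 * n + 5 + 2 * k) ≤ 1 :=
    div_le_one_of_le₀ (by linarith) (by positivity)
  have h₃ : (2 * n + 1 + 2 * k : ℝ) / (2 * n + 2 + 2 * k) ≤ 1 :=
    div_le_one_of_le₀ (by linarith) (by positivity)
  rw [h_factor]
  exact mul_le_of_le_one_left (by positivity)
    (mul_le_one₀ (mul_le_one₀ h₁ (by positivity) h₂) (by positivity) h₃)

lemma leibnizRatioLeft_le_const (n k : ℕ) : leibnizRatioLeft n k ≤ 16 / 27 := by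
  have h_linear : (3 * n + 4 + 2 * k : ℝ) / (3 * n + 1 + 2 * k) ≤ 4 := by
    rw [div_le_iff₀ (by positivity)]
    linarith [n.cast_nonneg (α := ℝ), k.cast_nonneg (α := ℝ)]
  have h_cubic : (4 * (2 * n + 1) ^ 2 * (2 * n + 2) : ℝ) /
      ((6 * n + 3 + 2 * k) * (6 * n + 5 + 2 * k) * (6 * n + 7 + 2 * k)) ≤ 4 / 27 := by
    calc
      _ ≤ (4 * (2 * n + 1) ^ 2 * (2 * n + 2) : ℝ) /
          ((6 * n + 3) * (6 * n + 3) * (6 * n + 6)) := by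
        gcongr _ / (?_ * ?_ * ?_) <;> linarith [k.cast_nonneg (α := ℝ)]
      _ = 4 / 27 := by
        field_simp
        ring
  calc
    leibnizRatioLeft n k ≤ _ := leibnizRatioLeft_le n k
    _ ≤ 4 * (4 / 27) := by gcongr
    _ = 16 / 27 := by norm_num

lemma abs_leibnizTerm_succ_left (n k : ℕ) :
    |leibnizTerm (n + 1) k| = leibnizRatioLeft n k * |leibnizTerm n k| := by
  rw [leibnizTerm_succ_left, abs_mul, abs_of_nonneg (leibnizRatioLeft_nonneg n k), mul_comm]

lemma abs_leibnizTerm_succ_left_le (n k : ℕ) :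
    |leibnizTerm (n + 1) k| ≤ 16 / 27 * |leibnizTerm n k| := by
  rw [abs_leibnizTerm_succ_left]
  gcongr
  exact leibnizRatioLeft_le_const n k

lemma antitone_abs_leibnizTerm (k : ℕ) : Antitone fun n ↦ |leibnizTerm n k| :=
  antitone_nat_of_succ_le fun n ↦ by
    linarith [abs_leibnizTerm_succ_left_le n k, abs_nonneg (leibnizTerm n k)]

lemma abs_leibnizTerm_zero_left (k : ℕ) : |leibnizTerm 0 k| = 1 / (2 * k + 1) := by
  rw [leibnizTerm_zero_left, abs_div, abs_neg_one_pow, abs_of_pos (by positivity)]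

lemma abs_leibnizTerm_le_geometric (n k : ℕ) :
    |leibnizTerm n k| ≤ (16 / 27) ^ n * |leibnizTerm 0 k| :=
  le_geom (u := fun n ↦ |leibnizTerm n k|) (by norm_num) n
    fun m _ ↦ abs_leibnizTerm_succ_left_le m k

lemma tendsto_leibnizTerm_left (k : ℕ) : Tendsto (leibnizTerm · k) atTop (𝓝 0) := by
  refine squeeze_zero_norm (abs_leibnizTerm_le_geometric · k) ?_
  simpa using (tendsto_pow_atTop_nhds_zero_of_lt_one (r := (16 / 27 : ℝ))
    (by norm_num) (by norm_num)).mul_const |leibnizTerm 0 k|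

lemma tendsto_leibnizTerm_right (n : ℕ) : Tendsto (leibnizTerm n) atTop (𝓝 0) := by
  refine squeeze_zero_norm (fun k ↦ ?_) (tendsto_one_div_add_atTop_nhds_zero_nat (𝕜 := ℝ))
  calc
    |leibnizTerm n k| ≤ |leibnizTerm 0 k| := antitone_abs_leibnizTerm k n.zero_le
    _ = 1 / (2 * k + 1) := abs_leibnizTerm_zero_left k
    _ ≤ 1 / (k + 1) := by gcongr; linarith [k.cast_nonneg (α := ℝ)]

lemma abs_leibnizTerm_one_left_le (k : ℕ) : |leibnizTerm 1 k| ≤ 1 / ((k : ℝ) + 1) ^ 2 := by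
  rw [abs_leibnizTerm_succ_left, abs_leibnizTerm_zero_left]
  calc
    _ ≤ _ := mul_le_mul_of_nonneg_right (leibnizRatioLeft_le 0 k) (by positivity)
    _ = 8 * (4 + 2 * k) / ((1 + 2 * k) ^ 2 * (3 + 2 * k) * (5 + 2 * k) * (7 + 2 * k) : ℝ) := by
      push_cast
      field_simp
      ring
    _ ≤ 1 / ((k : ℝ) + 1) ^ 2 := by
      rw [div_le_div_iff₀ (by positivity) (by positivity), ← sub_nonneg]
      ring_nf
      positivity

lemma summable_one_div_nat_add_one_sq : Summable fun k : ℕ ↦ 1 / ((k : ℝ) + 1) ^ 2 := by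
  exact_mod_cast (summable_nat_add_iff 1).2 (Real.summable_one_div_nat_pow.2 one_lt_two)

lemma leibnizCert_nonneg (n k : ℕ) : 0 ≤ leibnizCert n k := by
  unfold leibnizCert
  positivity

lemma leibnizCert_le_one (n k : ℕ) : leibnizCert n k ≤ 1 := by
  rw [leibnizCert, div_le_one (by positivity), ← sub_nonneg]
  ring_nf
  positivity

lemma abs_leibnizMate_le (n k : ℕ) : |leibnizMate n k| ≤ |leibnizTerm n k| := by
  rw [leibnizMate, abs_mul, abs_of_nonneg (leibnizCert_nonneg n k)]
  exact mul_le_of_le_one_right (abs_nonneg _) (leibnizCert_le_one n k)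

lemma tendsto_leibnizMate_right (n : ℕ) : Tendsto (leibnizMate n) atTop (𝓝 0) :=
  squeeze_zero_norm (abs_leibnizMate_le n) (by simpa using (tendsto_leibnizTerm_right n).abs)

lemma summable_leibnizMate_left (k : ℕ) : Summable (leibnizMate · k) :=
  ((summable_geometric_of_lt_one (r := (16 / 27 : ℝ)) (by norm_num) (by norm_num)).mul_right
    |leibnizTerm 0 k|).of_norm_bounded
      fun n ↦ (abs_leibnizMate_le n k).trans (abs_leibnizTerm_le_geometric n k)

theorem hasSum_leibnizMate : HasSum (leibnizMate · 0) (Real.pi / 4) := by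
  have h_leibniz : Tendsto (fun K ↦ ∑ k ∈ range K, leibnizTerm 0 k) atTop (𝓝 (Real.pi / 4)) := by
    simpa only [leibnizTerm_zero_left] using Real.tendsto_sum_pi_div_four
  have h_bound : ∀ᶠ n in atTop, ∀ k, ‖leibnizTerm n k‖ ≤ 1 / ((k : ℝ) + 1) ^ 2 := by
    filter_upwards [eventually_ge_atTop 1] with n hn k
    exact (antitone_abs_leibnizTerm k hn).trans (abs_leibnizTerm_one_left_le k)
  rw [(summable_leibnizMate_left 0).hasSum_iff_tendsto_nat]
  simpa using isWZPair_leibniz.tendsto_sum_column_zero tendsto_leibnizMate_right h_leibniz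
    summable_one_div_nat_add_one_sq tendsto_leibnizTerm_left h_bound

lemma leibnizTerm_zero_right (n : ℕ) :
    leibnizTerm n 0 = (4 / 27) ^ n *
      (risingFactorial 1 n * risingFactorial (1 / 2) n * risingFactorial (1 / 2) n *
        risingFactorial (1 / 2) n) /
      (risingFactorial (7 / 6) n * risingFactorial (5 / 4) n * risingFactorial (7 / 4) n *
        risingFactorial (11 / 6) n) * ((3 * n + 1) * (4 * n + 3) * (6 * n + 5) / 15) := by
  induction n with
  | zero => norm_num [leibnizTerm, risingFactorial_zero]
  | succ n ih =>
    have h₁ := (risingFactorial_pos (a := 7 / 6) (by norm_num) n).ne'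
    have h₂ := (risingFactorial_pos (a := 5 / 4) (by norm_num) n).ne'
    have h₃ := (risingFactorial_pos (a := 7 / 4) (by norm_num) n).ne'
    have h₄ := (risingFactorial_pos (a := 11 / 6) (by norm_num) n).ne'
    rw [leibnizTerm_succ_left, ih, leibnizRatioLeft]
    simp only [risingFactorial_succ]
    push_cast
    field_simp
    ring

lemma leibnizCert_zero_right (n : ℕ) :
    leibnizCert n 0 = (184 * n ^ 3 + 338 * n ^ 2 + 193 * n + 32) /
      (3 * ((3 * n + 1) * (4 * n + 3) * (6 * n + 5))) := by
  unfold leibnizCert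
  push_cast
  field_simp
  ring

end Leibniz

theorem stmt_13 :
    45 * Real.pi / 4 =
      ∑' k : ℕ, (4/27 : ℝ) ^ k * (risingFactorial (1) k * risingFactorial (1/2) k * risingFactorial (1/2) k * risingFactorial (1/2) k) /
        (risingFactorial (7/6) k * risingFactorial (5/4) k * risingFactorial (7/4) k * risingFactorial (11/6) k) * (184 * (k:ℝ)^3 + 338 * (k:ℝ)^2 + 193 * (k:ℝ) + 32) := by
  rw [mul_div_assoc, ← (hasSum_leibnizMate.mul_left 45).tsum_eq]
  refine tsum_congr fun k ↦ ?_
  rw [leibnizMate, leibnizTerm_zero_right, leibnizCert_zero_right]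
  field_simp
  ring
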